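/- arXiv:2507.04653 — 3 statements merged into one kernel-verified Lean document; each statement's English description precedes it below -/
import Mathlib

section
/- For every positive integer n, w_n(x) equals the little Schröder polynomial s_n(x) = ∑_{k=1}^{n} (1/n)·C(n,k)·C(n,k-1)·x^{k-1}·(x+1)^{n-k} as polynomials. -/
open Polynomial

/-- `w(n,k) = C(n-1,k-1)·C(n+k,k) − C(n,k)·C(n+k,k-1)`. -/
def w (n k : ℕ) : ℤ :=
  ((n - 1).choose (k - 1) * (n + k).choose k : ℤ) - (n.choose k * (n + k).choose (k - 1) : ℤ)

/-- `w_n(x) = ∑_{k=1}^{n} w(n,k) x^{k-1}`. -/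
noncomputable def wPoly (n : ℕ) : Polynomial ℚ :=
  ∑ k ∈ Finset.Icc 1 n, Polynomial.C ((w n k : ℚ)) * X ^ (k - 1)

/-- The little Schröder polynomial
`s_n(x) = ∑_{k=1}^{n} (1/n)·C(n,k)·C(n,k-1)·x^{k-1}·(x+1)^{n-k}`. -/
noncomputable def schroederPoly (n : ℕ) : Polynomial ℚ :=
  ∑ k ∈ Finset.Icc 1 n,
    Polynomial.C ((n.choose k * n.choose (k - 1) : ℚ) / n) * X ^ (k - 1) * (X + 1) ^ (n - k)

/-- `w(m+1,j+1) = C(m,j)·C(m+j+2,j)/(j+1)`. -/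
theorem w_succ_succ (m j : ℕ) :
    (w (m + 1) (j + 1) : ℚ) = m.choose j * (m + j + 2).choose j / (j + 1) := by
  have h₁ : ((m + 1 : ℕ) : ℚ) * m.choose j = (m + 1).choose (j + 1) * (j + 1 : ℕ) := by
    exact_mod_cast Nat.add_one_mul_choose_eq m j
  have h₂ : ((m + j + 2).choose (j + 1) : ℚ) * (j + 1 : ℕ) = (m + j + 2).choose j * (m + 2 : ℕ) := by
    have h := Nat.choose_succ_right_eq (m + j + 2) j
    rw [show m + j + 2 - j = m + 2 by omega] at h
    exact_mod_cast h
  have hj : (j + 1 : ℚ) ≠ 0 := by positivity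
  rw [w, show m + 1 + (j + 1) = m + j + 2 by ring, eq_div_iff hj]
  push_cast [Nat.add_sub_cancel] at h₁ h₂ ⊢
  linear_combination (m.choose j : ℚ) * h₂ + ((m + j + 2).choose j : ℚ) * h₁

theorem choose_mul_choose_succ_div (m i : ℕ) :
    ((m + 1).choose (i + 1) * (m + 1).choose i : ℚ) / (m + 1 : ℕ) =
      m.choose i * (m + 1).choose i / (i + 1) := by
  have h : ((m + 1 : ℕ) : ℚ) * m.choose i = (m + 1).choose (i + 1) * (i + 1 : ℕ) := by
    exact_mod_cast Nat.add_one_mul_choose_eq m i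
  push_cast at h ⊢
  have hi : (i + 1 : ℚ) ≠ 0 := by positivity
  have hm : (m + 1 : ℚ) ≠ 0 := by positivity
  rw [div_eq_div_iff hm hi]
  linear_combination -((m + 1).choose i : ℚ) * h

/-- A form of Vandermonde's identity. -/
theorem sum_choose_mul_choose_div (n d : ℕ) :
    ∑ i ∈ Finset.range (d + 1), (d.choose i * n.choose i : ℚ) / (i + 1) =
      (n + d + 1).choose d / (d + 1) := by
  have hd : (d + 1 : ℚ) ≠ 0 := by positivity
  rw [add_assoc, Nat.add_choose_eq, Finset.Nat.sum_antidiagonal_eq_sum_range_succ_mk, eq_div_iff hd,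
    Finset.sum_mul, Nat.cast_sum]
  refine Finset.sum_congr rfl fun i hi => ?_
  have hid : i ≤ d := Nat.lt_succ_iff.mp (Finset.mem_range.mp hi)
  have h : ((d + 1 : ℕ) : ℚ) * d.choose i = (d + 1).choose (d - i) * (i + 1 : ℕ) := by
    rw [← Nat.choose_symm_of_eq_add (show d + 1 = (i + 1) + (d - i) by omega)]
    exact_mod_cast Nat.add_one_mul_choose_eq d i
  have hi' : (i + 1 : ℚ) ≠ 0 := by positivity
  push_cast at h ⊢
  rw [div_mul_eq_mul_div, div_eq_iff hi']
  linear_combination (n.choose i : ℚ) * h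

theorem coeff_wPoly_succ (m d : ℕ) :
    (wPoly (m + 1)).coeff d = m.choose d * (m + d + 2).choose d / (d + 1) := by
  rw [wPoly, ← Finset.Ico_add_one_right_eq_Icc, Finset.sum_Ico_eq_sum_range, finsetSum_coeff]
  simp only [add_comm 1, Nat.add_sub_cancel, w_succ_succ, coeff_C_mul_X_pow, Finset.sum_ite_eq,
    Finset.mem_range]
  split_ifs with h
  · rfl
  · simp [Nat.choose_eq_zero_of_lt (show m < d by omega)]

theorem coeff_schroederPoly_succ (m d : ℕ) :
    (schroederPoly (m + 1)).coeff d = m.choose d * (m + d + 2).choose d / (d + 1) := by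
  have hterm (i : ℕ) :
      (C (((m + 1).choose (i + 1) * (m + 1).choose i : ℚ) / (m + 1 : ℕ)) * X ^ i *
        (X + 1) ^ (m - i)).coeff d =
      m.choose d * ((d.choose i * (m + 1).choose i : ℚ) / (i + 1)) := by
    rw [choose_mul_choose_succ_div, mul_assoc, coeff_C_mul, coeff_X_pow_mul']
    split_ifs with hid
    · have h : (m.choose d * d.choose i : ℚ) = m.choose i * (m - i).choose (d - i) := by
        exact_mod_cast Nat.choose_mul hid
      rw [coeff_X_add_one_pow]
      linear_combination -((m + 1).choose i / (i + 1) : ℚ) * h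
    · simp [Nat.choose_eq_zero_of_lt (not_le.mp hid)]
  rw [schroederPoly, ← Finset.Ico_add_one_right_eq_Icc, Finset.sum_Ico_eq_sum_range,
    finsetSum_coeff]
  simp only [add_comm 1, Nat.add_sub_cancel, Nat.add_sub_add_right, hterm]
  rw [← Finset.mul_sum]
  rcases lt_or_ge m d with hmd | hdm
  · simp [Nat.choose_eq_zero_of_lt hmd]
  · have hsub : Finset.range (d + 1) ⊆ Finset.range (m + 1) :=
      Finset.range_subset_range.mpr (by omega)
    rw [← Finset.sum_subset hsub, sum_choose_mul_choose_div, ← mul_div_assoc,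
      show m + 1 + d + 1 = m + d + 2 by ring]
    intro i _ hi
    have hdi : d < i := by simpa using hi
    simp [Nat.choose_eq_zero_of_lt hdi]

/-- For every positive integer `n`, `w_n(x) = s_n(x)`. -/
theorem wPoly_eq_schroederPoly (n : ℕ) (hn : 1 ≤ n) : wPoly n = schroederPoly n := by
  obtain ⟨m, rfl⟩ := Nat.exists_eq_add_of_le' hn
  ext d
  rw [coeff_wPoly_succ, coeff_schroederPoly_succ]
end

section
/- For all positive integers α, m, n, r, the q-polynomial congruence ∑_{k=0}^{n-1} [k(k+1)]^r · [2k+1] · q^{(n-1-k)(αm+1)} · w_k^{(α)}(x;q)^m ≡ 0 (mod [n]) holds, where the congruence is in ℤ[q][x] modulo the q-integer [n] = (1−q^n)/(1−q). -/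
open Polynomial LaurentPolynomial

/-- The Gaussian binomial coefficient as a polynomial in `q` over `ℤ`. -/
noncomputable def qbinom : ℕ → ℕ → Polynomial ℤ
  | _, 0 => 1
  | 0, _ + 1 => 0
  | n + 1, k + 1 => qbinom n k + Polynomial.X ^ (k + 1) * qbinom n (k + 1)

/-- The `q`-integer `[m] = 1 + q + ⋯ + q^{m-1}` in `ℤ[q]`. -/
noncomputable def qint (m : ℕ) : Polynomial ℤ := ∑ i ∈ Finset.range m, Polynomial.X ^ i

/-- The `q`-integer `[m]` as a Laurent polynomial in `q`. -/
noncomputable def qintL (m : ℕ) : LaurentPolynomial ℤ := (qint m).toLaurent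

/-- `qbinom(k-1,j-1)·qbinom(k+j,j) − qbinom(k,j)·qbinom(k+j,j-1)`. -/
noncomputable def qwCoeff (k j : ℕ) : Polynomial ℤ :=
  qbinom (k - 1) (j - 1) * qbinom (k + j) j - qbinom k j * qbinom (k + j) (j - 1)

/-- `w_k^{(α)}(x;q) = ∑_{j=1}^{k} q^{α(C(j+1,2)−(k+1)(j−1))} ·
(qbinom(k-1,j-1)·qbinom(k+j,j) − qbinom(k,j)·qbinom(k+j,j-1))^α · x^{j-1}`,
a polynomial in `x` with coefficients in `ℤ[q,q⁻¹]` (the exponent of `q` may be negative). -/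
noncomputable def qw (α k : ℕ) : Polynomial (LaurentPolynomial ℤ) :=
  ∑ j ∈ Finset.Icc 1 k,
    Polynomial.C (LaurentPolynomial.T ((α : ℤ) * (((j + 1).choose 2 : ℤ) - ((k : ℤ) + 1) * ((j : ℤ) - 1))) *
        ((qwCoeff k j).toLaurent) ^ α) *
      Polynomial.X ^ (j - 1)

theorem qbinom_zero_right (n : ℕ) : qbinom n 0 = 1 := by
  cases n <;> rfl

theorem qbinom_succ_succ (n k : ℕ) :
    qbinom (n + 1) (k + 1) = qbinom n k + Polynomial.X ^ (k + 1) * qbinom n (k + 1) := rfl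

theorem qbinom_eq_zero_of_lt {n k : ℕ} (h : n < k) : qbinom n k = 0 := by
  induction n generalizing k with
  | zero =>
    obtain ⟨k, rfl⟩ := Nat.exists_eq_succ_of_ne_zero h.ne'
    rfl
  | succ n ih =>
    obtain ⟨k, rfl⟩ := Nat.exists_eq_succ_of_ne_zero (Nat.ne_zero_of_lt h)
    rw [Nat.succ_eq_add_one, qbinom_succ_succ, ih (by omega), ih (by omega)]
    ring

theorem qbinom_self (n : ℕ) : qbinom n n = 1 := by
  induction n with
  | zero => rfl
  | succ n ih => rw [qbinom_succ_succ, ih, qbinom_eq_zero_of_lt (Nat.lt_succ_self n)]; ring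

theorem qint_zero : qint 0 = 0 := by simp [qint]

theorem one_sub_X_mul_qint (m : ℕ) :
    (1 - Polynomial.X) * qint m = 1 - Polynomial.X ^ m := by
  rw [qint, mul_neg_geom_sum]

theorem qint_succ (m : ℕ) : qint (m + 1) = qint m + Polynomial.X ^ m := by
  rw [qint, Finset.sum_range_succ, qint]

theorem qint_succ' (m : ℕ) : qint (m + 1) = 1 + Polynomial.X * qint m := by
  rw [qint_succ]
  linear_combination one_sub_X_mul_qint m

theorem qint_add (m n : ℕ) : qint (m + n) = qint m + Polynomial.X ^ m * qint n := by
  induction n with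
  | zero => simp [qint_zero]
  | succ n ih => rw [← add_assoc, qint_succ, ih, qint_succ]; ring

/-- The absorption identity `[k+1] qbinom(n+1,k+1) = [n+1] qbinom(n,k)`. -/
theorem qint_mul_qbinom_succ (n k : ℕ) :
    qint (k + 1) * qbinom (n + 1) (k + 1) = qint (n + 1) * qbinom n k := by
  induction n generalizing k with
  | zero =>
    cases k with
    | zero => rw [qbinom_self, qbinom_self]
    | succ k => rw [qbinom_eq_zero_of_lt (by omega), qbinom_eq_zero_of_lt (by omega)]; ring
  | succ n ih =>
    have h := ih k
    rw [qbinom_succ_succ (n + 1) k]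
    cases k with
    | zero =>
      rw [qbinom_zero_right] at h ⊢
      rw [qint_succ' (n + 1), qint_succ' 0, qint_zero] at *
      linear_combination Polynomial.X * h
    | succ k =>
      have h' := ih k
      have hr := qbinom_succ_succ n k
      rw [qint_succ' (n + 1)]
      have hk := qint_succ' (k + 1)
      linear_combination Polynomial.X ^ (k + 1 + 1) * h + Polynomial.X * h' +
        qbinom (n + 1) (k + 1) * hk - Polynomial.X * qint (n + 1) * hr

/-- `q^{k+1} [k+1] qbinom(n,k+1) = ([n+1] - [k+1]) qbinom(n,k)`. -/
theorem qint_mul_qbinom_right (n k : ℕ) :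
    Polynomial.X ^ (k + 1) * qint (k + 1) * qbinom n (k + 1) =
      (qint (n + 1) - qint (k + 1)) * qbinom n k := by
  linear_combination qint_mul_qbinom_succ n k - qint (k + 1) * qbinom_succ_succ n k

theorem qint_mul_qbinom_add (k j : ℕ) :
    qint (j + 1) * qbinom (k + (j + 1)) (j + 1) = qint (k + 1) * qbinom (k + (j + 1)) j := by
  have h := qint_mul_qbinom_right (k + (j + 1)) j
  rw [show k + (j + 1) + 1 = j + 1 + (k + 1) by ring, qint_add (j + 1)] at h
  refine mul_left_cancel₀ (pow_ne_zero (j + 1) Polynomial.X_ne_zero) ?_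
  linear_combination h

/-- `[k] [k+1] (qbinom(k-1,j-1) qbinom(k+j,j) - qbinom(k,j) qbinom(k+j,j-1))
= q^k [j] qbinom(k,j) qbinom(k+j,j)`. -/
theorem qint_mul_qwCoeff (k j : ℕ) (hj : 1 ≤ j) :
    qint k * qint (k + 1) * qwCoeff k j =
      Polynomial.X ^ k * qint j * (qbinom k j * qbinom (k + j) j) := by
  obtain ⟨j, rfl⟩ := Nat.exists_eq_add_of_le' hj
  rcases Nat.eq_zero_or_pos k with rfl | hk
  · rw [qint_zero, qbinom_eq_zero_of_lt (Nat.succ_pos j)]; ring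
  obtain ⟨k, rfl⟩ := Nat.exists_eq_add_of_le' hk
  have h1 := qint_mul_qbinom_succ k j
  have h2 := qint_mul_qbinom_add (k + 1) j
  have h3 := qint_succ (k + 1)
  rw [qwCoeff, Nat.add_sub_cancel, Nat.add_sub_cancel]
  linear_combination (-qint (k + 1 + 1) * qbinom (k + 1 + (j + 1)) (j + 1)) * h1 +
    qint (k + 1) * qbinom (k + 1) (j + 1) * h2 +
    qint (j + 1) * qbinom (k + 1) (j + 1) * qbinom (k + 1 + (j + 1)) (j + 1) * h3

theorem qwCoeff_eq_zero_of_lt {k j : ℕ} (hk : 1 ≤ k) (h : k < j) : qwCoeff k j = 0 := by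
  rw [qwCoeff, qbinom_eq_zero_of_lt (by omega), qbinom_eq_zero_of_lt h]
  ring

section RootOfUnity

variable {K : Type*} [Field K] {ζ : K} {d : ℕ}

theorem one_sub_mul_aeval_qint (ζ : K) (m : ℕ) :
    (1 - ζ) * aeval ζ (qint m) = 1 - ζ ^ m := by
  simpa using congrArg (aeval ζ) (one_sub_X_mul_qint m)

theorem aeval_qint_eq_zero_iff (h1 : ζ ≠ 1) (m : ℕ) : aeval ζ (qint m) = 0 ↔ ζ ^ m = 1 := by
  have h := one_sub_mul_aeval_qint ζ m
  have h0 : 1 - ζ ≠ 0 := sub_ne_zero.mpr h1.symm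
  constructor
  · intro hm
    rw [hm, mul_zero] at h
    exact (sub_eq_zero.mp h.symm).symm
  · intro hm
    rw [hm, sub_self] at h
    exact (mul_eq_zero.mp h).resolve_left h0

theorem IsPrimitiveRoot.aeval_qbinom_eq_zero (hζ : IsPrimitiveRoot ζ d) {v : ℕ} (hv : 0 < v)
    (hvd : v < d) : aeval ζ (qbinom d v) = 0 := by
  have h1 : ζ ≠ 1 := hζ.ne_one (by omega)
  obtain ⟨v, rfl⟩ := Nat.exists_eq_add_of_le' hv
  obtain ⟨d, rfl⟩ := Nat.exists_eq_add_of_le' (hv.trans hvd)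
  have h := congrArg (aeval ζ) (qint_mul_qbinom_succ d v)
  rw [map_mul, map_mul, (aeval_qint_eq_zero_iff h1 _).2 hζ.pow_eq_one, zero_mul] at h
  refine (mul_eq_zero.mp h).resolve_left fun h0 => ?_
  exact hζ.pow_ne_one_of_pos_of_lt hv.ne' hvd ((aeval_qint_eq_zero_iff h1 _).1 h0)

theorem aeval_qbinom_succ_succ (ζ : K) (n k : ℕ) :
    aeval ζ (qbinom (n + 1) (k + 1)) =
      aeval ζ (qbinom n k) + ζ ^ (k + 1) * aeval ζ (qbinom n (k + 1)) := by
  rw [qbinom_succ_succ]; simp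

/-- The `q`-Lucas theorem, specialized to a primitive root of unity. -/
theorem IsPrimitiveRoot.aeval_qbinom_lucas (hζ : IsPrimitiveRoot ζ d) (a u : ℕ) {b v : ℕ}
    (hb : b < d) (hv : v < d) :
    aeval ζ (qbinom (a * d + b) (u * d + v)) = a.choose u * aeval ζ (qbinom b v) := by
  have hpow (u v : ℕ) : ζ ^ (u * d + v) = ζ ^ v := by
    rw [pow_add, mul_comm u, pow_mul, hζ.pow_eq_one, one_pow, one_mul]
  induction a generalizing u b v with
  | zero =>
    cases u with
    | zero => simp
    | succ u =>
      rw [qbinom_eq_zero_of_lt (by rw [Nat.succ_mul]; omega)]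
      simp
  | succ a iha =>
    induction b generalizing u v with
    | zero =>
      obtain ⟨e, rfl⟩ := Nat.exists_eq_add_of_le' hb
      rw [show (a + 1) * (e + 1) + 0 = a * (e + 1) + e + 1 by ring]
      cases v with
      | zero =>
        cases u with
        | zero => simp [qbinom_zero_right]
        | succ u =>
          have h1 := iha u (Nat.lt_succ_self e) (Nat.lt_succ_self e)
          have h2 := iha (u + 1) (Nat.lt_succ_self e) (Nat.succ_pos e)
          have h3 := hpow (u + 1) 0
          rw [show (u + 1) * (e + 1) + 0 = u * (e + 1) + e + 1 by ring] at *
          rw [aeval_qbinom_succ_succ, h1, h2, h3]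
          simp [qbinom_zero_right, qbinom_self, Nat.choose_succ_succ]
      | succ v =>
        have h1 := iha u (Nat.lt_succ_self e) (Nat.lt_of_succ_lt hv)
        have h2 := iha u (Nat.lt_succ_self e) hv
        have h3 := hpow u (v + 1)
        have h4 := hζ.aeval_qbinom_eq_zero (Nat.succ_pos v) hv
        rw [Nat.succ_eq_add_one, aeval_qbinom_succ_succ] at h4
        rw [← add_assoc] at *
        rw [aeval_qbinom_succ_succ, h1, h2, h3, qbinom_eq_zero_of_lt (Nat.succ_pos v), map_zero]
        linear_combination (a.choose u : K) * h4
    | succ b ihb =>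
      rw [← add_assoc]
      cases v with
      | zero =>
        cases u with
        | zero => simp [qbinom_zero_right]
        | succ u =>
          obtain ⟨e, rfl⟩ := Nat.exists_eq_add_of_le' (Nat.zero_lt_of_lt hb)
          have h1 := ihb u (Nat.lt_of_succ_lt hb) (Nat.lt_succ_self e)
          have h2 := ihb (u + 1) (Nat.lt_of_succ_lt hb) (Nat.succ_pos e)
          have h3 := hpow (u + 1) 0
          rw [qbinom_eq_zero_of_lt (show b < e by omega)] at h1
          rw [show (u + 1) * (e + 1) + 0 = u * (e + 1) + e + 1 by ring] at *
          rw [aeval_qbinom_succ_succ, h1, h2, h3]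
          simp [qbinom_zero_right]
      | succ v =>
        have h1 := ihb u (Nat.lt_of_succ_lt hb) (Nat.lt_of_succ_lt hv)
        have h2 := ihb u (Nat.lt_of_succ_lt hb) hv
        have h3 := hpow u (v + 1)
        rw [← add_assoc] at *
        rw [aeval_qbinom_succ_succ, h1, h2, h3, aeval_qbinom_succ_succ]
        ring

theorem pow_mul_aeval_qbinom_succ (ζ : K) (b v : ℕ) :
    ζ ^ (v + 1) * (1 - ζ ^ (v + 1)) ^ 2 *
        aeval ζ (qbinom b (v + 1) * qbinom (b + (v + 1)) (v + 1)) =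
      (ζ ^ (v + 1) - ζ ^ (b + 1)) * (1 - ζ ^ (b + v + 1)) *
        aeval ζ (qbinom b v * qbinom (b + v) v) := by
  have h1 := congrArg (aeval ζ) (qint_mul_qbinom_right b v)
  have h2 := congrArg (aeval ζ) (qint_mul_qbinom_succ (b + v) v)
  simp only [map_mul, map_sub, map_pow, aeval_X] at h1 h2 ⊢
  rw [← add_assoc]
  have e1 := one_sub_mul_aeval_qint ζ (v + 1)
  have e2 := one_sub_mul_aeval_qint ζ (b + 1)
  have e3 := one_sub_mul_aeval_qint ζ (b + v + 1)
  rw [← e1, ← e3, show ζ ^ (v + 1) - ζ ^ (b + 1) =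
    (1 - ζ) * aeval ζ (qint (b + 1)) - (1 - ζ) * aeval ζ (qint (v + 1)) by rw [e1, e2]; ring]
  linear_combination (1 - ζ) ^ 2 * aeval ζ (qint (v + 1)) *
      aeval ζ (qbinom (b + v + 1) (v + 1)) * h1 +
    (1 - ζ) ^ 2 * (aeval ζ (qint (b + 1)) - aeval ζ (qint (v + 1))) * aeval ζ (qbinom b v) * h2

/-- Reflection `b ↦ -1 - b` (modulo the order of `ζ`) of `qbinom(b,v) qbinom(b+v,v)`. -/
theorem IsPrimitiveRoot.aeval_qbinom_mul_reflect_of_lt (hζ : IsPrimitiveRoot ζ d) {b b' : ℕ}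
    (hbb : ζ ^ (b + b' + 1) = 1) {v : ℕ} (hv : v < d) :
    aeval ζ (qbinom b v * qbinom (b + v) v) =
      ζ ^ ((2 * b + 1) * v) * aeval ζ (qbinom b' v * qbinom (b' + v) v) := by
  induction v with
  | zero => simp [qbinom_zero_right]
  | succ v ih =>
    have ih := ih (Nat.lt_of_succ_lt hv)
    have h0 : ζ ≠ 0 := hζ.ne_zero (by omega)
    have hne : 1 - ζ ^ (v + 1) ≠ 0 :=
      sub_ne_zero.mpr (hζ.pow_ne_one_of_pos_of_lt (Nat.succ_ne_zero v) hv).symm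
    refine mul_left_cancel₀ (mul_ne_zero (pow_ne_zero (v + 1) h0) (pow_ne_zero 2 hne)) ?_
    rw [pow_mul_aeval_qbinom_succ, ih]
    have h := pow_mul_aeval_qbinom_succ ζ b' v
    have key : (ζ ^ (v + 1) - ζ ^ (b + 1)) * (1 - ζ ^ (b + v + 1)) =
        ζ ^ (2 * b + 1) * ((ζ ^ (v + 1) - ζ ^ (b' + 1)) * (1 - ζ ^ (b' + v + 1))) := by
      have hbb' : ζ ^ b * ζ ^ b' * ζ = 1 := by rw [← hbb]; ring
      simp only [pow_succ, pow_add, mul_comm 2 b, pow_mul]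
      generalize ζ ^ b = z at *
      generalize ζ ^ b' = z' at *
      generalize ζ ^ v = t at *
      linear_combination ζ * (z - t + t * (z * t * ζ - z * z' * ζ)) * hbb'
    rw [key, mul_add ((2 * b + 1)), pow_add]
    linear_combination (-ζ ^ ((2 * b + 1) * v) * ζ ^ (2 * b + 1)) * h

theorem IsPrimitiveRoot.aeval_qbinom_add_lucas (hζ : IsPrimitiveRoot ζ d) (a u : ℕ) {b v : ℕ}
    (hb : b < d) (hv : v < d) :
    aeval ζ (qbinom (a * d + b + (u * d + v)) (u * d + v)) =
      (a + u).choose u * aeval ζ (qbinom (b + v) v) := by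
  rcases Nat.lt_or_ge (b + v) d with h | h
  · rw [← hζ.aeval_qbinom_lucas _ _ h hv]
    congr 2
    ring
  · obtain ⟨c, hc⟩ := Nat.exists_eq_add_of_le h
    have h1 := hζ.aeval_qbinom_lucas (a + u + 1) u (show c < d by omega) hv
    have h2 := hζ.aeval_qbinom_lucas 1 0 (show c < d by omega) hv
    rw [qbinom_eq_zero_of_lt (show c < v by omega), map_zero, mul_zero] at h1 h2
    rw [show a * d + b + (u * d + v) = (a + u + 1) * d + c by linarith, h1, hc,
      show d + c = 1 * d + c by ring, show v = 0 * d + v by ring, h2, mul_zero]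

theorem IsPrimitiveRoot.aeval_qbinom_mul_reflect (hζ : IsPrimitiveRoot ζ d) (a j : ℕ) {b b' : ℕ}
    (hbb : b + b' + 1 = d) :
    aeval ζ (qbinom (a * d + b) j * qbinom (a * d + b + j) j) =
      ζ ^ ((2 * (a * d + b) + 1) * j) *
        aeval ζ (qbinom (a * d + b') j * qbinom (a * d + b' + j) j) := by
  have hd : 0 < d := by omega
  have hv := Nat.mod_lt j hd
  have hj : j = j / d * d + j % d := by rw [mul_comm, Nat.div_add_mod]
  generalize j / d = u at hj
  generalize j % d = v at hj hv
  subst hj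
  have h := hζ.aeval_qbinom_mul_reflect_of_lt (b := b) (b' := b') (hbb ▸ hζ.pow_eq_one) hv
  rw [map_mul, map_mul] at *
  rw [hζ.aeval_qbinom_add_lucas _ _ (by omega) hv, hζ.aeval_qbinom_add_lucas _ _ (by omega) hv,
    hζ.aeval_qbinom_lucas _ _ (by omega) hv, hζ.aeval_qbinom_lucas _ _ (by omega) hv,
    show (2 * (a * d + b) + 1) * (u * d + v) =
      d * (2 * a * (u * d + v) + (2 * b + 1) * u) + (2 * b + 1) * v by ring,
    pow_add, pow_mul, hζ.pow_eq_one, one_pow, one_mul]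
  linear_combination (a.choose u * (a + u).choose u : K) * h

theorem one_sub_pow_mul_aeval_qwCoeff (ζ : K) (k : ℕ) {j : ℕ} (hj : 1 ≤ j) :
    (1 - ζ ^ k) * (1 - ζ ^ (k + 1)) * aeval ζ (qwCoeff k j) =
      ζ ^ k * (1 - ζ) * (1 - ζ ^ j) * aeval ζ (qbinom k j * qbinom (k + j) j) := by
  have h := congrArg (aeval ζ) (qint_mul_qwCoeff k j hj)
  simp only [map_mul, map_pow, aeval_X] at h ⊢
  rw [← one_sub_mul_aeval_qint, ← one_sub_mul_aeval_qint, ← one_sub_mul_aeval_qint]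
  linear_combination (1 - ζ) ^ 2 * h

theorem IsPrimitiveRoot.aeval_qwCoeff_reflect (hζ : IsPrimitiveRoot ζ d) (a : ℕ) {b b' j : ℕ}
    (hbb : b + b' + 1 = d) (hk : ζ ^ (a * d + b) ≠ 1) (hk' : ζ ^ (a * d + b + 1) ≠ 1)
    (hj : 1 ≤ j) :
    aeval ζ (qwCoeff (a * d + b) j) =
      ζ ^ ((2 * (a * d + b) + 1) * j) * aeval ζ (qwCoeff (a * d + b') j) := by
  have h := one_sub_pow_mul_aeval_qwCoeff ζ (a * d + b) hj
  have h' := one_sub_pow_mul_aeval_qwCoeff ζ (a * d + b') hj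
  have hz : ζ ^ (a * d + b) * ζ ^ (a * d + b') * ζ = 1 := by
    rw [← pow_add, ← pow_succ, show a * d + b + (a * d + b') + 1 = d * (2 * a + 1) by
      rw [← hbb]; ring, pow_mul, hζ.pow_eq_one, one_pow]
  rw [hζ.aeval_qbinom_mul_reflect a j hbb] at h
  refine mul_left_cancel₀ (mul_ne_zero (sub_ne_zero.mpr hk.symm) (sub_ne_zero.mpr hk'.symm)) ?_
  rw [h]
  generalize ζ ^ ((2 * (a * d + b) + 1) * j) = y at *
  rw [pow_succ] at *
  generalize ζ ^ (a * d + b) = z at *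
  generalize ζ ^ (a * d + b') = z' at *
  generalize aeval ζ (qwCoeff (a * d + b') j) = c at *
  generalize aeval ζ (qbinom (a * d + b') j * qbinom (a * d + b' + j) j) = M at *
  have e : (1 - z) * (1 - z * ζ) = z ^ 2 * ζ * ((1 - z') * (1 - z' * ζ)) := by
    linear_combination (z + z * ζ - 1 - z * z' * ζ) * hz
  rw [e]
  linear_combination (-y * z ^ 2 * ζ) * h' - y * z * (1 - ζ) * (1 - ζ ^ j) * M * hz

end RootOfUnity

/-- A polynomial over `ℤ` that vanishes at all nontrivial complex `n`-th roots of unity is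
divisible by `[n]`. -/
theorem qint_dvd_of_forall_aeval_eq_zero {n : ℕ} (hn : 0 < n) {p : Polynomial ℤ}
    (h : ∀ ζ : ℂ, ζ ^ n = 1 → ζ ≠ 1 → aeval ζ p = 0) : qint n ∣ p := by
  rw [← Polynomial.map_dvd_map (Int.castRingHom ℂ) Int.cast_injective]
  · have hprod := X_pow_sub_one_eq_prod hn (Complex.isPrimitiveRoot_exp n hn.ne')
    have hdvd : (Polynomial.X ^ n - 1 : Polynomial ℂ) ∣
        (1 - Polynomial.X) * p.map (Int.castRingHom ℂ) := by
      rw [hprod]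
      refine Finset.prod_dvd_of_coprime
        (fun x _ y _ hxy => Polynomial.pairwise_coprime_X_sub_C Function.injective_id hxy)
        fun ζ hζ => ?_
      rw [Polynomial.dvd_iff_isRoot, Polynomial.IsRoot, Polynomial.eval_mul]
      rw [Polynomial.mem_nthRootsFinset hn] at hζ
      by_cases h1 : ζ = 1
      · simp [h1]
      · have := h ζ hζ h1
        rw [Polynomial.aeval_def, ← Polynomial.eval_map] at this
        exact mul_eq_zero_of_right _ this
    have hne : (1 - Polynomial.X : Polynomial ℂ) ≠ 0 :=
      sub_ne_zero.mpr fun h => Polynomial.X_ne_C (1 : ℂ) (by simpa using h.symm)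
    have hq : (1 - Polynomial.X) * (qint n).map (Int.castRingHom ℂ) =
        1 - Polynomial.X ^ n := by
      simpa using congrArg (Polynomial.map (Int.castRingHom ℂ)) (one_sub_X_mul_qint n)
    rw [← mul_dvd_mul_iff_left hne, hq, ← neg_sub, neg_dvd]
    exact hdvd
  · exact Polynomial.monic_geom_sum_X hn.ne'

theorem qintL_dvd_of_forall_eval₂_eq_zero {n : ℕ} (hn : 0 < n) {f : LaurentPolynomial ℤ}
    (h : ∀ ζ : ℂˣ, ζ ^ n = 1 → ζ ≠ 1 → LaurentPolynomial.eval₂ (algebraMap ℤ ℂ) ζ f = 0) :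
    qintL n ∣ f := by
  obtain ⟨N, p, hp⟩ := f.exists_T_pow
  have hdvd : qint n ∣ p := by
    refine qint_dvd_of_forall_aeval_eq_zero hn fun ζ hζ h1 => ?_
    have h0 : ζ ≠ 0 := fun h0 => by simp [h0, hn.ne'] at hζ
    have := h (Units.mk0 ζ h0) (Units.ext (by simpa using hζ)) fun h2 =>
      h1 (by simpa using congrArg Units.val h2)
    have hp' := congrArg (LaurentPolynomial.eval₂ (algebraMap ℤ ℂ) (Units.mk0 ζ h0)) hp
    rw [map_mul, this, zero_mul, LaurentPolynomial.eval₂_toLaurent] at hp'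
    exact hp'
  have h1 : qintL n ∣ f * LaurentPolynomial.T N := by
    rw [← hp]
    exact map_dvd Polynomial.toLaurent hdvd
  exact (LaurentPolynomial.isUnit_T (N : ℤ)).dvd_mul_right.mp h1

section Evaluation

variable {K : Type*} [Field K]

theorem map_eval₂_qw (u : Kˣ) (α : ℕ) {k N : ℕ} (hk : 1 ≤ k) (hN : k ≤ N) (hα : 1 ≤ α) :
    (qw α k).map (LaurentPolynomial.eval₂ (algebraMap ℤ K) u) =
      ∑ j ∈ Finset.Icc 1 N,
        Polynomial.C (((u : K) ^ (((j + 1).choose 2 : ℤ) - ((k : ℤ) + 1) * ((j : ℤ) - 1)) *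
          aeval (u : K) (qwCoeff k j)) ^ α) * Polynomial.X ^ (j - 1) := by
  rw [qw, Polynomial.map_sum]
  rw [← Finset.sum_subset (Finset.Icc_subset_Icc_right hN)]
  · refine Finset.sum_congr rfl fun j _ => ?_
    rw [Polynomial.map_mul, Polynomial.map_C, Polynomial.map_pow, Polynomial.map_X, map_mul,
      map_pow, LaurentPolynomial.eval₂_T, LaurentPolynomial.eval₂_toLaurent,
      ← Polynomial.aeval_def, Units.val_zpow_eq_zpow_val, mul_pow, mul_comm (α : ℤ), zpow_mul,
      zpow_natCast]
  · intro j hj hjk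
    rw [Finset.mem_Icc] at hj hjk
    rw [qwCoeff_eq_zero_of_lt hk (by omega), map_zero, mul_zero, zero_pow (by omega), map_zero,
      zero_mul]

theorem IsPrimitiveRoot.map_eval₂_qw_reflect {u : Kˣ} {d : ℕ} (hu : IsPrimitiveRoot (u : K) d)
    {α : ℕ} (hα : 1 ≤ α) (a : ℕ) {b b' : ℕ} (hbb : b + b' + 1 = d)
    (hk : (u : K) ^ (a * d + b) ≠ 1) (hk' : (u : K) ^ (a * d + b + 1) ≠ 1) :
    (qw α (a * d + b)).map (LaurentPolynomial.eval₂ (algebraMap ℤ K) u) =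
      Polynomial.C ((u : K) ^ ((2 * (a * d + b) + 1) * α)) *
        (qw α (a * d + b')).map (LaurentPolynomial.eval₂ (algebraMap ℤ K) u) := by
  have h1 : 1 ≤ a * d + b := by
    rw [Nat.one_le_iff_ne_zero]
    intro h
    exact hk (by rw [h, pow_zero])
  have h1' : 1 ≤ a * d + b' := by
    rw [Nat.one_le_iff_ne_zero]
    intro h
    refine hk' ?_
    rw [show a * d + b + 1 = d by omega, hu.pow_eq_one]
  rw [map_eval₂_qw u α h1 (show _ ≤ a * d + d by omega) hα,
    map_eval₂_qw u α h1' (show _ ≤ a * d + d by omega) hα, Finset.mul_sum]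
  refine Finset.sum_congr rfl fun j hj => ?_
  have hj := (Finset.mem_Icc.mp hj).1
  have hd : (u : K) ^ ((d : ℤ) * ((2 * a + 1) * (j - 1))) = 1 := by
    rw [zpow_mul, zpow_natCast, hu.pow_eq_one, one_zpow]
  have hexp : (u : K) ^ (((j + 1).choose 2 : ℤ) - (((a * d + b : ℕ) : ℤ) + 1) * ((j : ℤ) - 1)) *
      (u : K) ^ ((2 * (a * d + b) + 1) * j) = (u : K) ^ (2 * (a * d + b) + 1) *
        (u : K) ^ (((j + 1).choose 2 : ℤ) - (((a * d + b' : ℕ) : ℤ) + 1) * ((j : ℤ) - 1)) := by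
    rw [← zpow_natCast, ← zpow_natCast, ← zpow_add₀ u.ne_zero, ← zpow_add₀ u.ne_zero,
      ← mul_one ((u : K) ^ (((2 * (a * d + b) + 1 : ℕ) : ℤ) + _)), ← hd, ← zpow_add₀ u.ne_zero,
      ← hbb]
    congr 1
    push_cast
    ring
  rw [← mul_assoc, ← Polynomial.C_mul, hu.aeval_qwCoeff_reflect a hbb hk hk' hj,
    pow_mul _ _ α, ← mul_pow, ← mul_assoc, ← mul_assoc, hexp]

/-- The `k`-th summand of the sum in `qint_dvd_sum`. -/
noncomputable def qwSummand (α m n r k : ℕ) : Polynomial (LaurentPolynomial ℤ) :=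
  Polynomial.C ((qintL (k * (k + 1))) ^ r * qintL (2 * k + 1) *
    LaurentPolynomial.T (((n : ℤ) - 1 - k) * (α * m + 1))) * (qw α k) ^ m

theorem map_eval₂_qwSummand (u : Kˣ) (α m n r k : ℕ) :
    (qwSummand α m n r k).map (LaurentPolynomial.eval₂ (algebraMap ℤ K) u) =
      Polynomial.C (aeval (u : K) (qint (k * (k + 1))) ^ r * aeval (u : K) (qint (2 * k + 1)) *
        ((u : K) ^ ((n : ℤ) - 1 - k)) ^ (α * m + 1)) *
        (qw α k).map (LaurentPolynomial.eval₂ (algebraMap ℤ K) u) ^ m := by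
  rw [qwSummand, Polynomial.map_mul, Polynomial.map_pow, Polynomial.map_C,
    map_mul (LaurentPolynomial.eval₂ (algebraMap ℤ K) u),
    map_mul (LaurentPolynomial.eval₂ (algebraMap ℤ K) u), map_pow,
    LaurentPolynomial.eval₂_T, qintL, qintL, LaurentPolynomial.eval₂_toLaurent,
    LaurentPolynomial.eval₂_toLaurent, ← Polynomial.aeval_def, ← Polynomial.aeval_def,
    Units.val_zpow_eq_zpow_val, zpow_mul,
    show (α * m + 1 : ℤ) = ((α * m + 1 : ℕ) : ℤ) by push_cast; rfl, zpow_natCast]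

theorem IsPrimitiveRoot.map_eval₂_qwSummand_add_reflect {u : Kˣ} {d : ℕ}
    (hu : IsPrimitiveRoot (u : K) d) {α r : ℕ} (hα : 1 ≤ α) (hr : 1 ≤ r) (m n a : ℕ)
    (hd : 1 < d) {b b' : ℕ} (hbb : b + b' + 1 = d) :
    (qwSummand α m n r (a * d + b)).map (LaurentPolynomial.eval₂ (algebraMap ℤ K) u) +
      (qwSummand α m n r (a * d + b')).map (LaurentPolynomial.eval₂ (algebraMap ℤ K) u) = 0 := by
  have h1 : (u : K) ≠ 1 := hu.ne_one hd
  have hne : (1 - u : K) ≠ 0 := sub_ne_zero.mpr h1.symm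
  have hs : (u : K) ^ (a * d + b + (a * d + b') + 1) = 1 := by
    rw [show a * d + b + (a * d + b') + 1 = d * (2 * a + 1) by rw [← hbb]; ring, pow_mul,
      hu.pow_eq_one, one_pow]
  have hprod : aeval (u : K) (qint ((a * d + b') * (a * d + b' + 1))) =
      aeval (u : K) (qint ((a * d + b) * (a * d + b + 1))) := by
    refine mul_left_cancel₀ hne ?_
    rw [one_sub_mul_aeval_qint, one_sub_mul_aeval_qint]
    generalize a * d + b = k at *
    generalize a * d + b' = k' at *
    have e1 : (u : K) ^ (k * k') * (u : K) ^ (k' * (k' + 1)) = 1 := by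
      rw [← pow_add, show k * k' + k' * (k' + 1) = (k + k' + 1) * k' by ring, pow_mul, hs, one_pow]
    have e2 : (u : K) ^ (k * k') * (u : K) ^ (k * (k + 1)) = 1 := by
      rw [← pow_add, show k * k' + k * (k + 1) = (k + k' + 1) * k by ring, pow_mul, hs, one_pow]
    rw [mul_left_cancel₀ (pow_ne_zero _ u.ne_zero) (e1.trans e2.symm)]
  rw [map_eval₂_qwSummand, map_eval₂_qwSummand, hprod]
  by_cases h0 : aeval (u : K) (qint ((a * d + b) * (a * d + b + 1))) = 0
  · simp [h0, zero_pow (show r ≠ 0 by omega)]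
  rw [aeval_qint_eq_zero_iff h1] at h0
  have hk : (u : K) ^ (a * d + b) ≠ 1 := fun h => h0 (by rw [pow_mul, h, one_pow])
  have hk' : (u : K) ^ (a * d + b + 1) ≠ 1 := fun h => h0 (by rw [mul_comm, pow_mul, h, one_pow])
  rw [hu.map_eval₂_qw_reflect hα a hbb hk hk', mul_pow, ← Polynomial.C_pow, ← mul_assoc,
    ← Polynomial.C_mul, ← add_mul, ← Polynomial.C_add]
  refine mul_eq_zero_of_left ?_ _
  rw [Polynomial.C_eq_zero]
  generalize a * d + b = k at *
  generalize a * d + b' = k' at *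
  have hodd : (u : K) ^ (2 * k + 1) * aeval (u : K) (qint (2 * k' + 1)) =
      -aeval (u : K) (qint (2 * k + 1)) := by
    refine mul_left_cancel₀ hne ?_
    have e : (u : K) ^ (2 * k + 1) * (u : K) ^ (2 * k' + 1) = 1 := by
      rw [← pow_add, show 2 * k + 1 + (2 * k' + 1) = (k + k' + 1) * 2 by ring, pow_mul, hs,
        one_pow]
    linear_combination (u : K) ^ (2 * k + 1) * one_sub_mul_aeval_qint (u : K) (2 * k' + 1) +
      one_sub_mul_aeval_qint (u : K) (2 * k + 1) - e
  have hexp : (u : K) ^ ((n : ℤ) - 1 - k') =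
      (u : K) ^ (2 * k + 1) * (u : K) ^ ((n : ℤ) - 1 - k) := by
    rw [← zpow_natCast] at hs
    rw [← zpow_natCast, ← zpow_add₀ u.ne_zero, ← mul_one ((u : K) ^ ((n : ℤ) - 1 - k')), ← hs,
      ← zpow_add₀ u.ne_zero]
    congr 1
    push_cast
    ring
  rw [hexp, mul_pow, pow_succ ((u : K) ^ (2 * k + 1)), pow_mul (u : K),
    pow_mul ((u : K) ^ (2 * k + 1))]
  linear_combination aeval (u : K) (qint (k * (k + 1))) ^ r *
    (((u : K) ^ (2 * k + 1)) ^ α) ^ m * ((u : K) ^ ((n : ℤ) - 1 - k)) ^ (α * m + 1) * hodd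

end Evaluation

theorem Finset.sum_range_mul_eq_zero_of_reflect {M : Type*} [AddCommGroup M]
    [IsAddTorsionFree M] {t : ℕ → M} {d : ℕ} (s : ℕ)
    (h : ∀ a b b', b + b' + 1 = d → t (a * d + b) + t (a * d + b') = 0) :
    ∑ k ∈ Finset.range (s * d), t k = 0 := by
  induction s with
  | zero => simp
  | succ s ih =>
    rw [Nat.succ_mul, Finset.sum_range_add, ih, zero_add, ← self_eq_neg, ← Finset.sum_neg_distrib]
    conv_lhs => rw [← Finset.sum_range_reflect]
    refine Finset.sum_congr rfl fun b hb => ?_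
    rw [Finset.mem_range] at hb
    exact eq_neg_of_add_eq_zero_left (h s _ _ (by omega))

theorem sum_map_eval₂_qwSummand_eq_zero {α n r : ℕ} (hα : 1 ≤ α) (m : ℕ) (hn : 1 ≤ n)
    (hr : 1 ≤ r) {u : ℂˣ} (hu : u ^ n = 1) (hu1 : u ≠ 1) :
    ∑ k ∈ Finset.range n,
      (qwSummand α m n r k).map (LaurentPolynomial.eval₂ (algebraMap ℤ ℂ) u) = 0 := by
  have hζ : IsPrimitiveRoot (u : ℂ) (orderOf u) := by
    rw [← orderOf_units]
    exact IsPrimitiveRoot.orderOf _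
  have hdn : orderOf u ∣ n := orderOf_dvd_of_pow_eq_one hu
  have hd0 : 0 < orderOf u := Nat.pos_of_dvd_of_pos hdn hn
  have hd : 1 < orderOf u :=
    lt_of_le_of_ne hd0 fun h => hu1 (orderOf_eq_one_iff.mp h.symm)
  obtain ⟨s, hs⟩ := hdn
  have hs' : Finset.range n = Finset.range (s * orderOf u) := by rw [mul_comm, ← hs]
  rw [hs']
  exact Finset.sum_range_mul_eq_zero_of_reflect s fun a b b' hbb =>
    hζ.map_eval₂_qwSummand_add_reflect hα hr m n a hd hbb

/-- For all positive integers `α, m, n, r`,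
`∑_{k=0}^{n-1} [k(k+1)]^r [2k+1] q^{(n-1-k)(αm+1)} w_k^{(α)}(x;q)^m ≡ 0 (mod [n])`. -/
theorem qint_dvd_sum (α m n r : ℕ) (hα : 1 ≤ α) (hm : 1 ≤ m) (hn : 1 ≤ n) (hr : 1 ≤ r) :
    (Polynomial.C (qintL n) : Polynomial (LaurentPolynomial ℤ)) ∣
      ∑ k ∈ Finset.range n,
        Polynomial.C ((qintL (k * (k + 1))) ^ r * qintL (2 * k + 1) *
            LaurentPolynomial.T (((n : ℤ) - 1 - k) * (α * m + 1))) *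
          (qw α k) ^ m := by
  rw [Polynomial.C_dvd_iff_dvd_coeff]
  intro i
  refine qintL_dvd_of_forall_eval₂_eq_zero hn fun u hu hu1 => ?_
  rw [← Polynomial.coeff_map, Polynomial.map_sum]
  have h := congrArg (fun p => Polynomial.coeff p i)
    (sum_map_eval₂_qwSummand_eq_zero hα m hn hr hu hu1)
  simpa only [qwSummand, Polynomial.coeff_zero] using h
end

section
/- For all positive integers α, m, n, r, the polynomial ∑_{k=0}^{n-1} (-1)^k · [k(k+1)]_{q²}^r · [2k+1]_q · q^{(n-1-k)(2αm+1)} · w_k^{(α)}(x;q²)^m is divisible by ∏_{d|n, d>1 odd} Φ_d(q) · ∏_{d|n, d>1 even} Φ_d(q²). -/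
open Polynomial LaurentPolynomial

/-- `[m]_{q²}`, the `q`-integer `[m]` with `q` replaced by `q²`. -/
noncomputable def qintL2 (m : ℕ) : LaurentPolynomial ℤ :=
  ((qint m).comp (Polynomial.X ^ 2)).toLaurent

/-- `w_k^{(α)}(x;q²)`: the polynomial `w_k^{(α)}(x;q)` with `q` replaced by `q²`. -/
noncomputable def qw2 (α k : ℕ) : Polynomial (LaurentPolynomial ℤ) :=
  ∑ j ∈ Finset.Icc 1 k,
    Polynomial.C (LaurentPolynomial.T
          (2 * ((α : ℤ) * (((j + 1).choose 2 : ℤ) - ((k : ℤ) + 1) * ((j : ℤ) - 1)))) *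
        (((qwCoeff k j).comp (Polynomial.X ^ 2)).toLaurent) ^ α) *
      Polynomial.X ^ (j - 1)

section GaussianEvaluation

variable {K : Type*} [Field K] {Q : K} {d : ℕ}

/-- The value at `Q` of the Gaussian binomial coefficient. -/
noncomputable def qbinomEval (Q : K) (n k : ℕ) : K := aeval Q (qbinom n k)

/-- The value at `Q` of `qwCoeff k j`. -/
noncomputable def qwCoeffEval (Q : K) (k j : ℕ) : K := aeval Q (qwCoeff k j)

lemma qwCoeffEval_eq (k j : ℕ) : qwCoeffEval Q k j =
    qbinomEval Q (k - 1) (j - 1) * qbinomEval Q (k + j) j -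
      qbinomEval Q k j * qbinomEval Q (k + j) (j - 1) := by
  simp [qwCoeffEval, qwCoeff, qbinomEval]

@[simp] lemma qbinomEval_zero_right (n : ℕ) : qbinomEval Q n 0 = 1 := by
  cases n <;> simp [qbinomEval, qbinom]

@[simp] lemma qbinomEval_zero_succ (k : ℕ) : qbinomEval Q 0 (k + 1) = 0 := by
  simp [qbinomEval, qbinom]

lemma qbinomEval_succ_succ (n k : ℕ) : qbinomEval Q (n + 1) (k + 1) =
    qbinomEval Q n k + Q ^ (k + 1) * qbinomEval Q n (k + 1) := by
  simp [qbinomEval, qbinom]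

lemma qbinomEval_eq_zero_of_lt {n k : ℕ} (h : n < k) : qbinomEval Q n k = 0 := by
  induction n generalizing k with
  | zero => obtain ⟨k, rfl⟩ := Nat.exists_eq_succ_of_ne_zero h.ne'; simp
  | succ n ih =>
    obtain ⟨k, rfl⟩ := Nat.exists_eq_succ_of_ne_zero (Nat.ne_zero_of_lt h)
    rw [Nat.succ_eq_add_one, qbinomEval_succ_succ, ih (by omega), ih (by omega)]
    simp

lemma qbinomEval_self (n : ℕ) : qbinomEval Q n n = 1 := by
  induction n with
  | zero => simp
  | succ n ih => rw [qbinomEval_succ_succ, ih, qbinomEval_eq_zero_of_lt (by omega)]; simp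

lemma qbinomEval_absorb (n k : ℕ) : (1 - Q ^ (k + 1)) * qbinomEval Q (n + 1) (k + 1) =
    (1 - Q ^ (n + 1)) * qbinomEval Q n k := by
  induction n generalizing k with
  | zero =>
    cases k with
    | zero => simp [qbinomEval_succ_succ]
    | succ k => simp [qbinomEval_succ_succ]
  | succ n ih =>
    cases k with
    | zero =>
      have h := ih 0
      rw [qbinomEval_succ_succ]
      simp only [qbinomEval_zero_right] at h ⊢
      linear_combination Q * h
    | succ k =>
      have h1 := ih k
      have h2 := ih (k + 1)
      have h3 := qbinomEval_succ_succ (Q := Q) n k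
      rw [qbinomEval_succ_succ (n + 1) (k + 1)]
      linear_combination Q ^ (k + 2) * h2 + Q * h1 + Q * (Q ^ (n + 1) - 1) * h3

lemma qbinomEval_succ_right (n k : ℕ) :
    (1 - Q ^ (k + 1)) * Q ^ k * qbinomEval Q n (k + 1) =
      (Q ^ k - Q ^ n) * qbinomEval Q n k := by
  by_cases hQ : Q = 0
  · subst hQ
    rcases k.eq_zero_or_pos with rfl | hk
    · cases n <;> simp [qbinomEval_succ_succ]
    · rcases n.eq_zero_or_pos with rfl | hn
      · rw [qbinomEval_eq_zero_of_lt (by omega), qbinomEval_eq_zero_of_lt (by omega)]; simp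
      · simp [hk.ne', hn.ne']
  · have h1 := qbinomEval_absorb (Q := Q) n k
    have h2 := qbinomEval_succ_succ (Q := Q) n k
    apply mul_left_cancel₀ hQ
    linear_combination h1 - (1 - Q ^ (k + 1)) * h2

lemma one_sub_pow_ne_zero (hQ : IsPrimitiveRoot Q d) {i : ℕ} (hi : 0 < i) (hid : i < d) :
    1 - Q ^ i ≠ 0 :=
  sub_ne_zero.mpr (hQ.pow_ne_one_of_pos_of_lt hi.ne' hid).symm

lemma qbinomEval_order_eq_zero (hQ : IsPrimitiveRoot Q d) {i : ℕ} (hi : 0 < i) (hid : i < d) :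
    qbinomEval Q d i = 0 := by
  obtain ⟨i, rfl⟩ := Nat.exists_eq_succ_of_ne_zero hi.ne'
  obtain ⟨e, rfl⟩ := Nat.exists_eq_succ_of_ne_zero (Nat.ne_zero_of_lt hid)
  have h := qbinomEval_absorb (Q := Q) e i
  rw [← Nat.succ_eq_add_one e, hQ.pow_eq_one, sub_self, zero_mul] at h
  exact (mul_eq_zero.mp h).resolve_left (one_sub_pow_ne_zero hQ hi hid)

lemma qbinomEval_add_order_of_lt (hQ : IsPrimitiveRoot Q d) (n : ℕ) {j : ℕ} (hj : j < d) :
    qbinomEval Q (n + d) j = qbinomEval Q n j := by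
  induction n generalizing j with
  | zero =>
    rcases j.eq_zero_or_pos with rfl | h
    · simp
    · rw [zero_add, qbinomEval_order_eq_zero hQ h hj, qbinomEval_eq_zero_of_lt h]
  | succ n ih =>
    cases j with
    | zero => simp
    | succ j =>
      rw [Nat.add_right_comm, qbinomEval_succ_succ, qbinomEval_succ_succ, ih hj, ih (by omega)]

lemma qbinomEval_add_order_add_order (hQ : IsPrimitiveRoot Q d) (hd : 0 < d) (n j : ℕ) :
    qbinomEval Q (n + d) (j + d) = qbinomEval Q n (j + d) + qbinomEval Q n j := by
  induction n generalizing j with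
  | zero =>
    cases j with
    | zero => simp [qbinomEval_self, qbinomEval_eq_zero_of_lt hd]
    | succ j => rw [qbinomEval_eq_zero_of_lt (by omega), qbinomEval_eq_zero_of_lt (by omega),
        qbinomEval_eq_zero_of_lt (by omega), add_zero]
  | succ n ih =>
    cases j with
    | zero =>
      obtain ⟨e, rfl⟩ := Nat.exists_eq_succ_of_ne_zero hd.ne'
      have h := ih 0
      have h1 := qbinomEval_add_order_of_lt hQ n (j := e) (by omega)
      have h2 : Q ^ (e + 1) = 1 := hQ.pow_eq_one
      simp only [Nat.succ_eq_add_one, zero_add] at h h1 ⊢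
      rw [Nat.add_right_comm, qbinomEval_succ_succ, qbinomEval_succ_succ n, h, h1, h2]
      simp only [qbinomEval_zero_right]
      ring
    | succ j =>
      rw [Nat.add_right_comm n, Nat.add_right_comm j, qbinomEval_succ_succ,
        qbinomEval_succ_succ n (j + d), qbinomEval_succ_succ n j, ih j, Nat.add_right_comm j d 1,
        ih (j + 1), Nat.add_right_comm j 1 d, Nat.add_right_comm j d 1, pow_add Q (j + 1) d,
        hQ.pow_eq_one]
      ring

/-- The `q`-Lucas theorem. -/
lemma qbinomEval_lucas (hQ : IsPrimitiveRoot Q d) (a u : ℕ) {b v : ℕ} (hb : b < d) (hv : v < d) :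
    qbinomEval Q (a * d + b) (u * d + v) = (a.choose u : K) * qbinomEval Q b v := by
  induction a generalizing u with
  | zero =>
    cases u with
    | zero => simp
    | succ u => rw [qbinomEval_eq_zero_of_lt (by rw [add_mul]; omega)]; simp
  | succ a ih =>
    have e : (a + 1) * d + b = a * d + b + d := by ring
    cases u with
    | zero =>
      have h := ih 0
      rw [zero_mul, zero_add] at h ⊢
      rw [e, qbinomEval_add_order_of_lt hQ _ hv, h]
      simp
    | succ u =>
      have e' : (u + 1) * d + v = u * d + v + d := by ring
      have h := ih (u + 1)
      rw [e'] at h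
      rw [e, e', qbinomEval_add_order_add_order hQ (by omega), h, ih u, Nat.choose_succ_succ]
      push_cast
      ring

lemma qbinomEval_lucas_of_carry (hQ : IsPrimitiveRoot Q d) (a u : ℕ) {b v : ℕ} (hb : d ≤ b)
    (hbd : b < v + d) (hv : v < d) : qbinomEval Q (a * d + b) (u * d + v) = 0 := by
  have e : a * d + b = (a + 1) * d + (b - d) := by rw [add_mul]; omega
  rw [e, qbinomEval_lucas hQ _ _ (by omega) hv, qbinomEval_eq_zero_of_lt (n := b - d) (by omega),
    mul_zero]

lemma qwCoeffEval_lucas (hQ : IsPrimitiveRoot Q d) (a u : ℕ) {b v : ℕ} (hb : 0 < b)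
    (hbd : b + 1 < d) (hv : 0 < v) (hvd : v < d) :
    qwCoeffEval Q (a * d + b) (u * d + v) =
      (a.choose u : K) * ((a + u).choose u : K) * qwCoeffEval Q b v := by
  rw [qwCoeffEval_eq, qwCoeffEval_eq, Nat.add_sub_assoc hb, Nat.add_sub_assoc hv,
    show a * d + b + (u * d + v) = (a + u) * d + (b + v) by ring,
    qbinomEval_lucas hQ a u (b := b - 1) (v := v - 1) (by omega) (by omega),
    qbinomEval_lucas hQ a u (b := b) (v := v) (by omega) (by omega)]
  by_cases h : b + v < d
  · rw [qbinomEval_lucas hQ _ u h hvd, qbinomEval_lucas hQ _ u (v := v - 1) h (by omega)]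
    ring
  · have h1 := qbinomEval_lucas_of_carry hQ 0 0 (b := b + v) (v := v)
      (by omega) (by omega) (by omega)
    have h2 := qbinomEval_lucas_of_carry hQ 0 0 (b := b + v) (v := v - 1)
      (by omega) (by omega) (by omega)
    simp only [zero_mul, zero_add] at h1 h2
    rw [qbinomEval_lucas_of_carry hQ _ u (by omega) (by omega) hvd,
      qbinomEval_lucas_of_carry hQ _ u (v := v - 1) (by omega) (by omega) (by omega), h1, h2]
    ring

lemma qwCoeffEval_mul_order_eq_zero (hQ : IsPrimitiveRoot Q d) (a u : ℕ) {b : ℕ} (hb : 0 < b)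
    (hbd : b + 1 < d) : qwCoeffEval Q (a * d + b) ((u + 1) * d) = 0 := by
  rw [qwCoeffEval_eq, Nat.add_sub_assoc hb,
    show (u + 1) * d - 1 = u * d + (d - 1) by rw [add_mul]; omega,
    show a * d + b + (u + 1) * d = (a + (u + 1)) * d + b by ring,
    qbinomEval_lucas hQ a u (b := b - 1) (v := d - 1) (by omega) (by omega),
    qbinomEval_lucas hQ _ u (b := b) (v := d - 1) (by omega) (by omega),
    qbinomEval_eq_zero_of_lt (n := b) (by omega), qbinomEval_eq_zero_of_lt (n := b - 1) (by omega)]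
  ring

lemma qwCoeffEval_factor (hQ : Q ≠ 0) (t s : ℕ) :
    (1 - Q ^ (s + 1)) * qwCoeffEval Q (t + 1) (s + 1) =
    Q ^ (t + 1) * (1 - Q) * (qbinomEval Q t s * qbinomEval Q (t + s + 2) s) := by
  rw [qwCoeffEval_eq, Nat.add_sub_cancel, Nat.add_sub_cancel,
    show t + 1 + (s + 1) = t + s + 2 by ring]
  have h1 := qbinomEval_absorb (Q := Q) t s
  have h4 : (1 - Q ^ (s + 1)) * qbinomEval Q (t + s + 2) (s + 1) =
      (1 - Q ^ (t + 2)) * qbinomEval Q (t + s + 2) s := by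
    have h5 := qbinomEval_succ_right (Q := Q) (t + s + 2) s
    apply mul_left_cancel₀ (pow_ne_zero s hQ)
    linear_combination h5
  linear_combination qbinomEval Q t s * h4 - qbinomEval Q (t + s + 2) s * h1

lemma qbinomEval_mul_reflect (hQ : IsPrimitiveRoot Q d) {t t' s : ℕ} (ht : t + t' + 3 = d)
    (hs : s < d) :
    Q ^ (s * (2 * t + 3)) * (qbinomEval Q t' s * qbinomEval Q (t' + s + 2) s) =
      qbinomEval Q t s * qbinomEval Q (t + s + 2) s := by
  have hQ0 : Q ≠ 0 := hQ.ne_zero (by omega)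
  have key : ∀ t s, (1 - Q ^ (s + 1)) ^ 2 * Q ^ s *
      (qbinomEval Q t (s + 1) * qbinomEval Q (t + (s + 1) + 2) (s + 1)) =
      (Q ^ s - Q ^ t) * (1 - Q ^ (t + s + 3)) *
        (qbinomEval Q t s * qbinomEval Q (t + s + 2) s) := by
    intro t s
    have h1 := qbinomEval_succ_right (Q := Q) t s
    have h2 := qbinomEval_absorb (Q := Q) (t + s + 2) s
    rw [show t + (s + 1) + 2 = t + s + 2 + 1 by ring]
    linear_combination (1 - Q ^ (s + 1)) * qbinomEval Q (t + s + 2 + 1) (s + 1) * h1 +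
      (Q ^ s - Q ^ t) * qbinomEval Q t s * h2
  induction s with
  | zero => simp
  | succ s ih =>
    have hd : Q ^ t * Q ^ t' * Q ^ 3 = 1 := by rw [← pow_add, ← pow_add, ht, hQ.pow_eq_one]
    apply mul_left_cancel₀ (mul_ne_zero
      (pow_ne_zero 2 (one_sub_pow_ne_zero hQ (i := s + 1) s.succ_pos hs))
      (pow_ne_zero s hQ0))
    have ih := ih (by omega)
    have e : Q ^ ((s + 1) * (2 * t + 3)) = Q ^ (s * (2 * t + 3)) * (Q ^ t * Q ^ t * Q ^ 3) := by
      rw [← pow_add, ← pow_add, ← pow_add]; ring_nf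
    have e2 : Q ^ t * Q ^ t * Q ^ 3 * ((Q ^ s - Q ^ t') * (1 - Q ^ (t' + s + 3))) =
        (Q ^ s - Q ^ t) * (1 - Q ^ (t + s + 3)) := by
      rw [pow_add _ (t' + s), pow_add _ t', pow_add _ (t + s), pow_add _ t]
      linear_combination
        (-(Q ^ s * (Q ^ t * Q ^ 3) * (Q ^ s - Q ^ t')) - (Q ^ t - Q ^ s)) * hd
    rw [e]
    linear_combination Q ^ (s * (2 * t + 3)) * (Q ^ t * Q ^ t * Q ^ 3) * key t' s - key t s +
      (Q ^ s - Q ^ t) * (1 - Q ^ (t + s + 3)) * ih +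
      Q ^ (s * (2 * t + 3)) * (qbinomEval Q t' s * qbinomEval Q (t' + s + 2) s) * e2

lemma qwCoeffEval_reflect_of_lt (hQ : IsPrimitiveRoot Q d) {b b' v : ℕ} (hb : 0 < b) (hb' : 0 < b')
    (hbb : b + b' + 1 = d) (hv : 0 < v) (hvd : v < d) :
    Q ^ (v * (2 * b + 1)) * qwCoeffEval Q b' v = qwCoeffEval Q b v := by
  obtain ⟨t, rfl⟩ := Nat.exists_eq_add_of_le' hb
  obtain ⟨t', rfl⟩ := Nat.exists_eq_add_of_le' hb'
  obtain ⟨s, rfl⟩ := Nat.exists_eq_add_of_le' hv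
  have hQ0 : Q ≠ 0 := hQ.ne_zero (by omega)
  apply mul_left_cancel₀ (one_sub_pow_ne_zero hQ hv hvd)
  have h := qbinomEval_mul_reflect hQ (t := t) (t' := t') (s := s) (by omega) (by omega)
  have h1 := qwCoeffEval_factor hQ0 t s
  have h2 := qwCoeffEval_factor hQ0 t' s
  have e : Q ^ ((s + 1) * (2 * (t + 1) + 1)) * Q ^ (t' + 1) =
      Q ^ (s * (2 * t + 3)) * Q ^ (t + 1) := by
    rw [← pow_add, show (s + 1) * (2 * (t + 1) + 1) + (t' + 1) =
      s * (2 * t + 3) + (t + 1) + (t + 1 + (t' + 1) + 1) by ring, hbb, pow_add _ _ d,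
      hQ.pow_eq_one, mul_one, pow_add]
  linear_combination Q ^ ((s + 1) * (2 * (t + 1) + 1)) * h2 - h1 + Q ^ (t + 1) * (1 - Q) * h +
    (1 - Q) * (qbinomEval Q t' s * qbinomEval Q (t' + s + 2) s) * e

lemma pow_order_mul_add (hQ : IsPrimitiveRoot Q d) (a b : ℕ) :
    Q ^ (d * a + b) = Q ^ b := by
  rw [pow_add, pow_mul, hQ.pow_eq_one, one_pow, one_mul]

/-- At a primitive `d`-th root of unity, the coefficients are symmetric under reflection of `k`
within a block of `d` consecutive integers. -/
lemma qwCoeffEval_reflect (hQ : IsPrimitiveRoot Q d) (a : ℕ) {b b' j : ℕ} (hb : 0 < b)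
    (hb' : 0 < b') (hbb : b + b' + 1 = d) (hj : 0 < j) :
    Q ^ (j * (2 * (a * d + b) + 1)) * qwCoeffEval Q (a * d + b') j =
      qwCoeffEval Q (a * d + b) j := by
  have hd : 0 < d := by omega
  have hjd := Nat.div_add_mod' j d
  have hlt := Nat.mod_lt j hd
  rcases (j % d).eq_zero_or_pos with h0 | h0
  · obtain ⟨u, hu⟩ : ∃ u, j / d = u + 1 := by
      refine Nat.exists_eq_succ_of_ne_zero fun h => ?_
      rw [h, h0] at hjd
      omega
    rw [h0, hu, add_zero] at hjd
    rw [← hjd, qwCoeffEval_mul_order_eq_zero hQ a u hb (by omega),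
      qwCoeffEval_mul_order_eq_zero hQ a u hb' (by omega), mul_zero]
  · have h1 := qwCoeffEval_lucas hQ a (j / d) hb (by omega) h0 hlt
    have h2 := qwCoeffEval_lucas hQ a (j / d) hb' (by omega) h0 hlt
    have h3 := qwCoeffEval_reflect_of_lt hQ hb hb' hbb h0 hlt
    have e : Q ^ (j * (2 * (a * d + b) + 1)) = Q ^ (j % d * (2 * b + 1)) := by
      conv_lhs => rw [← hjd]
      rw [show (j / d * d + j % d) * (2 * (a * d + b) + 1) =
        d * (j / d * (2 * (a * d + b) + 1) + 2 * a * (j % d)) + j % d * (2 * b + 1) by ring,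
        pow_order_mul_add hQ]
    rw [hjd] at h1 h2
    rw [e, h1, h2]
    linear_combination (a.choose (j / d) : K) * ((a + j / d).choose (j / d) : K) * h3

lemma qwCoeffEval_eq_zero_of_lt {k j : ℕ} (hk : 0 < k) (h : k < j) : qwCoeffEval Q k j = 0 := by
  rw [qwCoeffEval_eq, qbinomEval_eq_zero_of_lt h, qbinomEval_eq_zero_of_lt (n := k - 1) (by omega)]
  ring

end GaussianEvaluation

section Specialization

variable {K : Type*} [Field K] {q : K} {d : ℕ} {φ : LaurentPolynomial ℤ →+* K}

lemma map_qintL (hφ : ∀ p : ℤ[X], φ (toLaurent p) = aeval q p) (k : ℕ) :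
    φ (qintL k) = ∑ i ∈ Finset.range k, q ^ i := by
  rw [qintL, hφ, qint]
  simp

lemma map_qintL2 (hφ : ∀ p : ℤ[X], φ (toLaurent p) = aeval q p) (k : ℕ) :
    φ (qintL2 k) = ∑ i ∈ Finset.range k, (q ^ 2) ^ i := by
  rw [qintL2, hφ, qint, aeval_comp]
  simp

lemma map_qw2 (hφ : ∀ p : ℤ[X], φ (toLaurent p) = aeval q p) (hT : ∀ z : ℤ, φ (T z) = q ^ z)
    (α : ℕ) {k M : ℕ} (hk : 0 < k) (hα : α ≠ 0) (hM : k ≤ M) :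
    (qw2 α k).map φ = ∑ j ∈ Finset.Icc 1 M,
      Polynomial.C (((q ^ 2) ^ (((j + 1).choose 2 : ℤ) - ((k : ℤ) + 1) * ((j : ℤ) - 1)) *
        qwCoeffEval (q ^ 2) k j) ^ α) * X ^ (j - 1) := by
  rw [← Finset.sum_subset (Finset.Icc_subset_Icc_right hM)]
  · simp only [qw2, Polynomial.map_sum, Polynomial.map_mul, Polynomial.map_C, Polynomial.map_pow,
      Polynomial.map_X]
    refine Finset.sum_congr rfl fun j _ => ?_
    congr 2
    rw [map_mul, hT, map_pow, hφ, aeval_comp, mul_pow, ← zpow_natCast (_ ^ _) α, ← zpow_mul,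
      zpow_mul, mul_comm (α : ℤ)]
    simp [qwCoeffEval]
  · intro j _ hj
    simp only [Finset.mem_Icc] at *
    rw [qwCoeffEval_eq_zero_of_lt hk (by omega)]
    simp [hα]

lemma map_qw2_reflect (hφ : ∀ p : ℤ[X], φ (toLaurent p) = aeval q p)
    (hT : ∀ z : ℤ, φ (T z) = q ^ z) (hq : IsPrimitiveRoot (q ^ 2) d) {α : ℕ} (hα : α ≠ 0)
    (a : ℕ) {b b' : ℕ} (hb : 0 < b) (hb' : 0 < b') (hbb : b + b' + 1 = d) :
    Polynomial.C (((q ^ 2) ^ (2 * (a * d + b) + 1)) ^ α) * (qw2 α (a * d + b')).map φ =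
      (qw2 α (a * d + b)).map φ := by
  have hQ0 : q ^ 2 ≠ 0 := hq.ne_zero (by omega)
  rw [map_qw2 hφ hT α (M := a * d + d) (by omega) hα (by omega),
    map_qw2 hφ hT α (M := a * d + d) (by omega) hα (by omega), Finset.mul_sum]
  refine Finset.sum_congr rfl fun j hj => ?_
  rw [Finset.mem_Icc] at hj
  rw [← mul_assoc, ← Polynomial.C_mul, ← mul_pow]
  congr 3
  rw [← qwCoeffEval_reflect hq a hb hb' hbb hj.1, ← mul_assoc, ← mul_assoc]
  congr 1
  rw [← zpow_natCast _ (2 * (a * d + b) + 1), ← zpow_natCast _ (j * (2 * (a * d + b) + 1)),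
    ← zpow_add₀ hQ0, ← zpow_add₀ hQ0]
  have e : ((2 * (a * d + b) + 1 : ℕ) : ℤ) +
      (((j + 1).choose 2 : ℤ) - (((a * d + b' : ℕ) : ℤ) + 1) * ((j : ℤ) - 1)) =
      ((j + 1).choose 2 : ℤ) - (((a * d + b : ℕ) : ℤ) + 1) * ((j : ℤ) - 1) +
      ((j * (2 * (a * d + b) + 1) : ℕ) : ℤ) + (d : ℤ) * (-(2 * a + 1) * (j - 1)) := by
    rw [← hbb]
    push_cast
    ring
  rw [e, zpow_add₀ hQ0, zpow_mul _ (d : ℤ), zpow_natCast _ d, hq.pow_eq_one, one_zpow, mul_one]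

lemma geom_sum_eq_zero_of_dvd {Q : K} (hQ : IsPrimitiveRoot Q d) (hd : 1 < d) {k : ℕ}
    (h : d ∣ k) : ∑ i ∈ Finset.range k, Q ^ i = 0 := by
  have h1 := geom_sum_mul Q k
  obtain ⟨c, rfl⟩ := h
  rw [pow_mul, hQ.pow_eq_one, one_pow, sub_self] at h1
  exact (mul_eq_zero.mp h1).resolve_right (sub_ne_zero.mpr (hQ.ne_one hd))

/-- The `k`-th summand of the alternating sum. -/
noncomputable def altTerm (α m n r k : ℕ) : Polynomial (LaurentPolynomial ℤ) :=
  Polynomial.C ((-1 : LaurentPolynomial ℤ) ^ k * (qintL2 (k * (k + 1))) ^ r *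
    qintL (2 * k + 1) * LaurentPolynomial.T (((n : ℤ) - 1 - k) * (2 * α * m + 1))) *
      (qw2 α k) ^ m

lemma map_altTerm_eq_zero (hφ : ∀ p : ℤ[X], φ (toLaurent p) = aeval q p)
    (hq : IsPrimitiveRoot (q ^ 2) d) (hd : 1 < d) (α m n : ℕ) {r k : ℕ} (hr : r ≠ 0)
    (hk : d ∣ k * (k + 1)) : (altTerm α m n r k).map φ = 0 := by
  simp [altTerm, map_qintL2 hφ, geom_sum_eq_zero_of_dvd hq hd hk, hr]

lemma map_altTerm_reflect (hφ : ∀ p : ℤ[X], φ (toLaurent p) = aeval q p)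
    (hT : ∀ z : ℤ, φ (T z) = q ^ z) (hq : IsPrimitiveRoot (q ^ 2) d)
    (hqd : (-1) ^ d * q ^ d = -1) {α r : ℕ} (hα : α ≠ 0) (hr : r ≠ 0) (m n a : ℕ) {b b' : ℕ}
    (hd : 1 < d) (hbb : b + b' + 1 = d) :
    (altTerm α m n r (a * d + b)).map φ + (altTerm α m n r (a * d + b')).map φ = 0 := by
  rcases b.eq_zero_or_pos with rfl | hb
  · rw [map_altTerm_eq_zero hφ hq hd _ _ _ hr ⟨a * (a * d + 1), by ring⟩,
      map_altTerm_eq_zero hφ hq hd _ _ _ hr ⟨(a * d + b') * (a + 1), by rw [← hbb]; ring⟩, add_zero]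
  rcases b'.eq_zero_or_pos with rfl | hb'
  · rw [map_altTerm_eq_zero hφ hq hd _ _ _ hr ⟨(a * d + b) * (a + 1), by rw [← hbb]; ring⟩,
      map_altTerm_eq_zero hφ hq hd _ _ _ hr ⟨a * (a * d + 1), by ring⟩, add_zero]
  have hQ0 : q ^ 2 ≠ 0 := hq.ne_zero (by omega)
  have hq0 : q ≠ 0 := fun h => hQ0 (by simp [h])
  have hQ1 : q ^ 2 - 1 ≠ 0 := sub_ne_zero.mpr (hq.ne_one hd)
  have hq1 : q - 1 ≠ 0 := fun h => hQ1 (by linear_combination (q + 1) * h)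
  have hqd2 : q ^ d * q ^ d = 1 := by rw [← mul_pow, ← pow_two, hq.pow_eq_one]
  have hA : ∑ i ∈ Finset.range ((a * d + b') * (a * d + b' + 1)), (q ^ 2) ^ i =
      ∑ i ∈ Finset.range ((a * d + b) * (a * d + b + 1)), (q ^ 2) ^ i := by
    rw [← mul_left_inj' hQ1, geom_sum_mul, geom_sum_mul]
    congr 1
    rcases le_total b b' with h | h
    · rw [show (a * d + b') * (a * d + b' + 1) =
        d * ((2 * a + 1) * (b' - b)) + (a * d + b) * (a * d + b + 1) from ?_, pow_order_mul_add hq]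
      obtain ⟨c, rfl⟩ := Nat.exists_eq_add_of_le h
      rw [Nat.add_sub_cancel_left, ← hbb]
      ring
    · rw [show (a * d + b) * (a * d + b + 1) =
        d * ((2 * a + 1) * (b - b')) + (a * d + b') * (a * d + b' + 1) from ?_,
        pow_order_mul_add hq]
      obtain ⟨c, rfl⟩ := Nat.exists_eq_add_of_le h
      rw [Nat.add_sub_cancel_left, ← hbb]
      ring
  have hB : q ^ (2 * (a * d + b) + 1) * ∑ i ∈ Finset.range (2 * (a * d + b') + 1), q ^ i =
      -∑ i ∈ Finset.range (2 * (a * d + b) + 1), q ^ i := by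
    have e : q ^ (2 * (a * d + b) + 1) * q ^ (2 * (a * d + b') + 1) = 1 := by
      rw [← pow_add, show 2 * (a * d + b) + 1 + (2 * (a * d + b') + 1) =
        2 * (d * (2 * a + 1)) by rw [← hbb]; ring, pow_mul, pow_mul, hq.pow_eq_one, one_pow]
    rw [← mul_left_inj' hq1, mul_assoc, geom_sum_mul, neg_mul, geom_sum_mul]
    linear_combination e
  have hC : q ^ (((n : ℤ) - 1 - (a * d + b' : ℕ)) * (2 * α * m + 1)) =
      q ^ (((n : ℤ) - 1 - (a * d + b : ℕ)) * (2 * α * m + 1)) * q ^ d *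
        (q ^ (2 * (a * d + b) + 1) * (((q ^ 2) ^ (2 * (a * d + b) + 1)) ^ α) ^ m) := by
    have e : ((n : ℤ) - 1 - (a * d + b' : ℕ)) * (2 * α * m + 1) =
        ((n : ℤ) - 1 - (a * d + b : ℕ)) * (2 * α * m + 1) + (d : ℕ) +
        ((2 * (a * d + b) + 1 : ℕ) + ((2 * (2 * (a * d + b) + 1) * α * m : ℕ) : ℤ)) +
        ((2 : ℕ) : ℤ) * ((d : ℕ) * (-(a * (2 * α * m + 1) + α * m + 1 : ℤ))) := by
      rw [← hbb]
      push_cast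
      ring
    rw [e, zpow_add₀ hq0, zpow_mul q (2 : ℕ), zpow_natCast q 2, zpow_mul _ (d : ℤ),
      zpow_natCast _ d, hq.pow_eq_one, one_zpow, mul_one, zpow_add₀ hq0, zpow_add₀ hq0,
      zpow_add₀ hq0, zpow_natCast, zpow_natCast, zpow_natCast]
    simp only [pow_mul]
  have hD : (-1 : K) ^ (a * d + b') = (-1) ^ (a * d + b) * ((-1) ^ d * -1) := by
    rw [← pow_succ, ← pow_add, show a * d + b + (d + 1) = a * d + b' + 2 * (b + 1) by
      rw [← hbb]; ring, pow_add _ _ (2 * _), pow_mul]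
    simp
  have hW := congrArg (· ^ m) (map_qw2_reflect hφ hT hq hα a hb hb' hbb)
  simp only [mul_pow, ← Polynomial.C_pow] at hW
  simp only [altTerm, Polynomial.map_mul, Polynomial.map_C, Polynomial.map_pow]
  rw [← hW, ← mul_assoc, ← Polynomial.C_mul, ← add_mul, ← Polynomial.C_add]
  convert zero_mul _
  rw [← Polynomial.C_0]
  congr 1
  simp only [map_mul, map_pow, map_neg, map_one, map_qintL hφ, map_qintL2 hφ, hT]
  rw [hA, hC, hD]
  set A := (∑ i ∈ Finset.range ((a * d + b) * (a * d + b + 1)), (q ^ 2) ^ i) ^ r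
  set Z := q ^ (((n : ℤ) - 1 - (a * d + b : ℕ)) * (2 * α * m + 1))
  set P := (((q ^ 2) ^ (2 * (a * d + b) + 1)) ^ α) ^ m
  linear_combination (-(-1) ^ (a * d + b) * ((-1) ^ d * q ^ d) * A * Z * P) * hB +
    (-1) ^ (a * d + b) * A * Z * P * (∑ i ∈ Finset.range (2 * (a * d + b) + 1), q ^ i) * hqd

lemma map_sum_altTerm_eq_zero [CharZero K] (hφ : ∀ p : ℤ[X], φ (toLaurent p) = aeval q p)
    (hT : ∀ z : ℤ, φ (T z) = q ^ z) (hq : IsPrimitiveRoot (q ^ 2) d)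
    (hqd : (-1) ^ d * q ^ d = -1) {α r : ℕ} (hα : α ≠ 0) (hr : r ≠ 0) (m : ℕ) {n : ℕ}
    (hd : 1 < d) (hdn : d ∣ n) :
    (∑ k ∈ Finset.range n, altTerm α m n r k).map φ = 0 := by
  rw [Polynomial.map_sum]
  have hlt (k : ℕ) : k % d < d := Nat.mod_lt k (by omega)
  have hdm (k : ℕ) := Nat.div_add_mod' k d
  have hadd (k : ℕ) : (altTerm α m n r k).map φ +
      (altTerm α m n r (k / d * d + (d - 1 - k % d))).map φ = 0 := by
    have h := map_altTerm_reflect hφ hT hq hqd hα hr m n (k / d) (b := k % d)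
      (b' := d - 1 - k % d) hd (by have := hlt k; omega)
    rwa [hdm] at h
  refine Finset.sum_involution (fun k _ => k / d * d + (d - 1 - k % d)) (fun k _ => hadd k) ?_ ?_ ?_
  · intro k _ hk he
    have h := hadd k
    rw [he] at h
    exact hk (add_self_eq_zero.mp h)
  · intro k hk
    obtain ⟨c, rfl⟩ := hdn
    rw [Finset.mem_range] at hk ⊢
    have h1 : k / d < c := Nat.div_lt_of_lt_mul hk
    nlinarith [hlt k, Nat.sub_le (d - 1) (k % d), Nat.sub_add_cancel hd.le]
  · intro k _
    have h1 : d - 1 - k % d < d := by omega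
    have h2 : (k / d * d + (d - 1 - k % d)) / d = k / d := by
      rw [add_comm, Nat.add_mul_div_right _ _ (by omega), Nat.div_eq_of_lt h1, zero_add]
    have h3 : (k / d * d + (d - 1 - k % d)) % d = d - 1 - k % d := by
      rw [add_comm, Nat.add_mul_mod_self_right, Nat.mod_eq_of_lt h1]
    rw [h2, h3]
    have := hlt k
    have := hdm k
    omega

end Specialization

/-- The order of the roots of unity at which `Φ_d(q)` (for odd `d`) or `Φ_d(q²)` (for even `d`)
vanishes. -/
def rootOrder (d : ℕ) : ℕ := if Even d then d * 2 else d

lemma rootOrder_pos {d : ℕ} (hd : 0 < d) : 0 < rootOrder d := by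
  unfold rootOrder
  split <;> omega

lemma rootOrder_injective : Function.Injective rootOrder := by
  intro a b h
  unfold rootOrder at h
  split at h <;> split at h <;> rename_i ha hb <;> grind

lemma exists_sq_isPrimitiveRoot {d : ℕ} (hd : 1 < d) : ∃ q : ℂ, IsPrimitiveRoot q (rootOrder d) ∧
    IsPrimitiveRoot (q ^ 2) d ∧ (-1) ^ d * q ^ d = -1 := by
  have hq := Complex.isPrimitiveRoot_exp (rootOrder d) (rootOrder_pos (by omega)).ne'
  refine ⟨_, hq, ?_⟩
  generalize Complex.exp (2 * Real.pi * Complex.I / (rootOrder d : ℂ)) = q at hq ⊢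
  rcases d.even_or_odd with h | h
  · rw [rootOrder, if_pos h] at hq
    refine ⟨hq.pow (by omega) (mul_comm _ _), ?_⟩
    rw [h.neg_one_pow, one_mul]
    exact (hq.pow (by omega) rfl).eq_neg_one_of_two_right
  · rw [rootOrder, if_neg (Nat.not_even_iff_odd.mpr h)] at hq
    refine ⟨hq.pow_of_coprime 2 (Nat.coprime_two_left.mpr h), ?_⟩
    rw [h.neg_one_pow, hq.pow_eq_one, mul_one]

lemma cyclotomic_rootOrder_dvd {d n : ℕ} (hd : 1 < d) (hdn : d ∣ n) {α r : ℕ} (hα : α ≠ 0)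
    (hr : r ≠ 0) (m i N : ℕ) {p : ℤ[X]}
    (hp : toLaurent p = (∑ k ∈ Finset.range n, altTerm α m n r k).coeff i * T N) :
    cyclotomic (rootOrder d) ℤ ∣ p := by
  obtain ⟨q, hq, hq2, hqd⟩ := exists_sq_isPrimitiveRoot hd
  have hpos := rootOrder_pos (d := d) (by omega)
  have hq0 : q ≠ 0 := hq.ne_zero hpos.ne'
  let φ : LaurentPolynomial ℤ →+* ℂ := LaurentPolynomial.eval₂ (Int.castRingHom ℂ) (Units.mk0 q hq0)
  have hφ (p : ℤ[X]) : φ (toLaurent p) = aeval q p := by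
    rw [LaurentPolynomial.eval₂_toLaurent]; rfl
  have hT (z : ℤ) : φ (T z) = q ^ z := by
    rw [LaurentPolynomial.eval₂_T]; simp
  have h := congrArg (Polynomial.coeff · i) (map_sum_altTerm_eq_zero hφ hT hq2 hqd hα hr m hd hdn)
  simp only [Polynomial.coeff_map, Polynomial.coeff_zero] at h
  rw [cyclotomic_eq_minpoly hq hpos]
  refine minpoly.isIntegrallyClosed_dvd (hq.isIntegral hpos) ?_
  rw [← hφ, hp, map_mul, h, zero_mul]

lemma prod_cyclotomic_eq (n : ℕ) :
    ((∏ d ∈ n.divisors.filter (fun d => 1 < d ∧ Odd d), Polynomial.cyclotomic d ℤ) *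
      ∏ d ∈ n.divisors.filter (fun d => 1 < d ∧ Even d),
        (Polynomial.cyclotomic d ℤ).comp (Polynomial.X ^ 2)) =
      ∏ d ∈ n.divisors.filter (1 < ·), cyclotomic (rootOrder d) ℤ := by
  rw [mul_comm, ← Finset.prod_filter_mul_prod_filter_not (n.divisors.filter (1 < ·)) Even,
    Finset.filter_filter, Finset.filter_filter]
  congr 1
  · refine Finset.prod_congr rfl fun d hd => ?_
    have h := (Finset.mem_filter.mp hd).2.2
    rw [rootOrder, if_pos h, ← expand_eq_comp_X_pow,
      cyclotomic_expand_eq_cyclotomic Nat.prime_two h.two_dvd]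
  · simp only [Nat.not_even_iff_odd]
    refine Finset.prod_congr rfl fun d hd => ?_
    rw [rootOrder, if_neg (Nat.not_even_iff_odd.mpr (Finset.mem_filter.mp hd).2.2)]

lemma prod_cyclotomic_dvd {s : Finset ℕ} {p : ℤ[X]}
    (h : ∀ d ∈ s, cyclotomic (rootOrder d) ℤ ∣ p) :
    ∏ d ∈ s, cyclotomic (rootOrder d) ℤ ∣ p := by
  rw [← Polynomial.map_dvd_map (Int.castRingHom ℚ) Int.cast_injective
    (monic_prod_of_monic _ _ fun d _ => cyclotomic.monic _ _), Polynomial.map_prod]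
  refine Finset.prod_dvd_of_coprime (fun a _ b _ hab => ?_) fun d hd => Polynomial.map_dvd _ (h d hd)
  simp only [Function.onFun, map_cyclotomic]
  exact cyclotomic.isCoprime_rat (rootOrder_injective.ne hab)

/-- For all positive integers `α, m, n, r`,
`∑_{k=0}^{n-1} (-1)^k [k(k+1)]_{q²}^r [2k+1]_q q^{(n-1-k)(2αm+1)} w_k^{(α)}(x;q²)^m`
is divisible by `∏_{d∣n, d>1 odd} Φ_d(q) · ∏_{d∣n, d>1 even} Φ_d(q²)`. -/
theorem cyclotomic_prod_dvd_alt_sum (α m n r : ℕ)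
    (hα : 1 ≤ α) (hm : 1 ≤ m) (hn : 1 ≤ n) (hr : 1 ≤ r) :
    (Polynomial.C
        (((∏ d ∈ n.divisors.filter (fun d => 1 < d ∧ Odd d), Polynomial.cyclotomic d ℤ) *
            ∏ d ∈ n.divisors.filter (fun d => 1 < d ∧ Even d),
              (Polynomial.cyclotomic d ℤ).comp (Polynomial.X ^ 2)).toLaurent) :
        Polynomial (LaurentPolynomial ℤ)) ∣
      ∑ k ∈ Finset.range n,
        Polynomial.C ((-1 : LaurentPolynomial ℤ) ^ k * (qintL2 (k * (k + 1))) ^ r *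
            qintL (2 * k + 1) *
            LaurentPolynomial.T (((n : ℤ) - 1 - k) * (2 * α * m + 1))) *
          (qw2 α k) ^ m := by

  rw [prod_cyclotomic_eq, Polynomial.C_dvd_iff_dvd_coeff]
  intro i
  change _ ∣ (∑ k ∈ Finset.range n, altTerm α m n r k).coeff i
  obtain ⟨N, p, hp⟩ := LaurentPolynomial.exists_T_pow
    ((∑ k ∈ Finset.range n, altTerm α m n r k).coeff i)
  have h : ∏ d ∈ n.divisors.filter (1 < ·), cyclotomic (rootOrder d) ℤ ∣ p :=
    prod_cyclotomic_dvd fun d hd => by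
      rw [Finset.mem_filter, Nat.mem_divisors] at hd
      exact cyclotomic_rootOrder_dvd hd.2 hd.1.1 (by omega) (by omega) m i N hp
  have h' := map_dvd toLaurent h
  rw [hp] at h'
  exact (LaurentPolynomial.isUnit_T (N : ℤ)).dvd_mul_right.mp h'
end
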